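/- Fix distinct a, b ∈ Σ and let W_{n−1} be a set of (n−1)-quasigroups of order 4 closed under equivalence, with w_{n−1} = |W_{n−1}|. Let U_n be the set of all functions g : Σ^(n−1) × {a,b} → Σ that are partial n-quasigroups and whose two layers g_a and g_b (where g_α(x₁,…,x_{n−1}) = g(x₁,…,x_{n−1},α)) both belong to W_{n−1}. Then |U_n| ≤ 3·w_{n−1}² / 2^(n+1). -/

import Mathlib

/-- The alphabet `Σ = {0,1,2,3}`. -/
abbrev V4 := Fin 4

/-- An `n`-quasigroup of order 4. -/
def IsNQuasigroup {n : ℕ} (f : (Fin n → V4) → V4) : Prop :=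
  ∀ (a : Fin n → V4) (i : Fin n) (b : V4),
    ∃! x : V4, f (Function.update a i x) = b

/-- Equivalence of `n`-quasigroups:
`f(x₁,…,xₙ) = τ₀(g(τ₁ x_{σ(1)},…,τₙ x_{σ(n)}))`. -/
def QEquiv {n : ℕ} (f g : (Fin n → V4) → V4) : Prop :=
  ∃ (σ : Equiv.Perm (Fin n)) (τ₀ : Equiv.Perm V4) (τ : Fin n → Equiv.Perm V4),
    ∀ x : Fin n → V4, f x = τ₀ (g fun i => τ i (x (σ i)))

/-- A set of `n`-quasigroups is closed under equivalence if it contains each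
member's whole equivalence class. -/
def ClosedUnderEquiv {n : ℕ} (W : Set ((Fin n → V4) → V4)) : Prop :=
  ∀ f ∈ W, ∀ g : (Fin n → V4) → V4, IsNQuasigroup g → QEquiv f g → g ∈ W

/-- A function on the domain `Σ^m × {a,b} ⊆ Σ^(m+1)` that is a partial
`(m+1)`-quasigroup: along every line of `Σ^(m+1)` each value is taken at most
once on the domain. -/
def IsPartialTwoLayerQuasigroup {m : ℕ} (a b : V4)
    (g : (Fin m → V4) → {y : V4 // y = a ∨ y = b} → V4) : Prop :=
  (∀ (v : Fin m → V4) (i : Fin m) (α : {y : V4 // y = a ∨ y = b}) (c : V4)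
      (x x' : V4), g (Function.update v i x) α = c →
      g (Function.update v i x') α = c → x = x') ∧
  (∀ (v : Fin m → V4) (c : V4) (α β : {y : V4 // y = a ∨ y = b}),
      g v α = c → g v β = c → α = β)

/-!
Take two quasigroups `f`, `g` of order `q` and a uniformly random isotopy `θ`. The transform of `f`
by `θ` is disjoint from `g` (the two functions differ everywhere) with probability at most
`(q - 1) / q * r ^ m`, where `r` is the probability that a permutation moving a given point
is a derangement.

This goes by induction on the arity `m`. Choose all of `θ` except the permutation `π` of the first
coordinate. On a line in the first direction both functions are bijections, so for exactly one
choice `π = P` they would agree on the whole line, and `π` must differ from `P` everywhere. Given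
the value of `π c` at one point `c`, this has probability at most `r`, while the layers of `f` at
`π c` and of `g` at `c` still have to be made disjoint by the rest of `θ`.

Averaging over all `θ` bounds the number of disjoint pairs in any isotopy-invariant set. The two
layers of a partial quasigroup on `Σ^m × {a, b}` are such a pair, and `r = 1/2` for `q = 4`.
-/

section Permutations

open Equiv Finset

variable {α : Type*} [Fintype α] [DecidableEq α]

theorem card_derangements_apply_eq_congr {c d e : α} (hd : d ≠ c) (he : e ≠ c) :
    #{π : Perm α | π ∈ derangements α ∧ π c = d} =
      #{π : Perm α | π ∈ derangements α ∧ π c = e} := by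
  have swap_c : swap d e c = c := swap_apply_of_ne_of_ne hd.symm he.symm
  refine card_equiv (MulAut.conj (swap d e)).toEquiv fun π => ?_
  have conj_c : MulAut.conj (swap d e) π c = swap d e (π c) := by simp [swap_c]
  have conj_derangement :
      MulAut.conj (swap d e) π ∈ derangements α ↔ π ∈ derangements α := by
    refine (swap d e).forall_congr fun {x} => ?_
    simp [swap_apply_eq_iff]
  simp [-MulAut.conj_apply, conj_c, conj_derangement, swap_apply_eq_iff]

theorem card_sub_one_mul_card_derangements_apply_eq {c d : α} (hd : d ≠ c) :
    (Fintype.card α - 1) * #{π : Perm α | π ∈ derangements α ∧ π c = d} =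
      numDerangements (Fintype.card α) := by
  have values_ne : ∀ π ∈ ({π | π ∈ derangements α} : Finset (Perm α)),
      π c ∈ (univ.erase c : Finset α) := by
    intro π hπ
    simpa using (mem_filter.1 hπ).2 c
  calc (Fintype.card α - 1) * #{π : Perm α | π ∈ derangements α ∧ π c = d}
      = ∑ e ∈ univ.erase c, #{π : Perm α | π ∈ derangements α ∧ π c = e} := by
        rw [sum_congr rfl fun e he => card_derangements_apply_eq_congr (ne_of_mem_erase he) hd]
        simp
    _ = #{π : Perm α | π ∈ derangements α} := by
        rw [card_eq_sum_card_fiberwise values_ne]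
        simp only [filter_filter]
    _ = numDerangements (Fintype.card α) := by
        rw [← card_derangements_eq_numDerangements, Fintype.card_subtype]

theorem card_sub_one_mul_card_avoiding_apply_eq {P : Perm α} {c d : α} (hd : d ≠ P c) :
    (Fintype.card α - 1) * #{π : Perm α | (∀ k, π k ≠ P k) ∧ π c = d} =
      numDerangements (Fintype.card α) := by
  have hd' : P⁻¹ d ≠ c := fun h => hd (Perm.inv_eq_iff_eq.1 h)
  rw [← card_sub_one_mul_card_derangements_apply_eq hd']
  congr 1
  refine card_equiv (Equiv.mulLeft P⁻¹) fun π => ?_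
  have mem_iff : P⁻¹ * π ∈ derangements α ↔ ∀ k, π k ≠ P k :=
    forall_congr' fun k => not_congr Perm.inv_eq_iff_eq
  simp [mem_iff]

theorem card_sub_one_mul_card_perm_rel_le {R : α → α → Prop} [∀ c d, Decidable (R c d)]
    {P : Perm α} (hP : ∀ c, ¬ R c (P c)) (c : α) :
    (Fintype.card α - 1) * #{π : Perm α | ∀ k, R k (π k)} ≤
      numDerangements (Fintype.card α) * #{d | R c d} := by
  have values_rel : ∀ π ∈ ({π | ∀ k, R k (π k)} : Finset (Perm α)),
      π c ∈ ({d | R c d} : Finset α) := by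
    intro π hπ
    simpa using (mem_filter.1 hπ).2 c
  rw [card_eq_sum_card_fiberwise values_rel, mul_sum, mul_comm (numDerangements _)]
  refine sum_le_card_nsmul _ _ _ fun d hd => ?_
  have hRd : R c d := (mem_filter.1 hd).2
  have hne : d ≠ P c := fun h => hP c (h ▸ hRd)
  rw [← card_sub_one_mul_card_avoiding_apply_eq hne, filter_filter]
  refine Nat.mul_le_mul_left _ (card_le_card (monotone_filter_right _ ?_))
  rintro π - ⟨hR, hπc⟩
  exact ⟨fun k hk => hP k (hk ▸ hR k), hπc⟩

theorem card_mul_card_perm_apply_eq (c d : α) :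
    Fintype.card α * #{π : Perm α | π c = d} = (Fintype.card α).factorial := by
  have fiber_card : ∀ e ∈ (univ : Finset α),
      #{π : Perm α | π c = e} = #{π : Perm α | π c = d} := fun e _ =>
    card_equiv (Equiv.mulLeft (swap d e)) fun π => by simp [swap_apply_eq_iff]
  calc Fintype.card α * #{π : Perm α | π c = d} = ∑ e, #{π : Perm α | π c = e} := by
        rw [sum_const_nat fiber_card, card_univ]
    _ = Fintype.card (Perm α) :=
        (card_eq_sum_card_fiberwise fun π _ => mem_coe.2 (mem_univ (π c))).symm
    _ = (Fintype.card α).factorial := Fintype.card_perm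

theorem card_perm_apply_ne (c d : α) :
    (#{π : Perm α | π c ≠ d} : ℝ) =
      (Fintype.card α).factorial * ((Fintype.card α - 1) / Fintype.card α) := by
  have card_ne_zero : (Fintype.card α : ℝ) ≠ 0 := by
    exact_mod_cast (Fintype.card_pos_iff.2 ⟨c⟩).ne'
  have card_eq : (Fintype.card α : ℝ) * #{π : Perm α | π c = d} = (Fintype.card α).factorial := by
    exact_mod_cast card_mul_card_perm_apply_eq c d
  have card_add : (#{π : Perm α | π c = d} : ℝ) + #{π : Perm α | π c ≠ d} =
      (Fintype.card α).factorial := by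
    rw [← Fintype.card_perm]
    exact_mod_cast card_filter_add_card_filter_not (s := univ) fun π : Perm α => π c = d
  field_simp
  linear_combination (Fintype.card α : ℝ) * card_add - card_eq

end Permutations

/-- The probability that a permutation of `q` points is a derangement, given that it moves a
prescribed point. For `q ≤ 1` the condition is impossible and the value is `0`. -/
noncomputable def conditionalDerangementProb (q : ℕ) : ℝ :=
  (numDerangements q / q.factorial) / ((q - 1) / q)

theorem conditionalDerangementProb_four : conditionalDerangementProb 4 = 1 / 2 := by
  have numDerangements_four : numDerangements 4 = 9 := rfl
  norm_num [conditionalDerangementProb, numDerangements_four, Nat.factorial]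

theorem numDerangements_mul_eq {q : ℕ} (hq : 1 < q) :
    (numDerangements q : ℝ) * q = (q - 1) * (q.factorial * conditionalDerangementProb q) := by
  have sub_one_pos : (0 : ℝ) < q - 1 := sub_pos.2 (Nat.one_lt_cast.2 hq)
  rw [conditionalDerangementProb]
  field_simp

section Quasigroups

open Equiv Finset

variable {ι α : Type*} {n : ℕ}

/-- A multiary quasigroup: an operation that is a bijection in each argument once the other
arguments are fixed. -/
def IsMultiaryQuasigroup [DecidableEq ι] (f : (ι → α) → α) : Prop :=
  ∀ x i, Function.Bijective fun y => f (Function.update x i y)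

/-- An isotopy `(τ₀, τ)`: a permutation of the values and one of each argument. -/
abbrev Isotopy (ι α : Type*) := Perm α × (ι → Perm α)

/-- The transform `x ↦ τ₀ (f (τ₁ x₁, …, τₙ xₙ))` of an operation `f` by an isotopy `(τ₀, τ)`. -/
def isotope (θ : Isotopy ι α) : Perm ((ι → α) → α) :=
  (Equiv.piCongrRight θ.2).symm.arrowCongr θ.1

theorem isotope_apply (θ : Isotopy ι α) (f : (ι → α) → α) (x : ι → α) :
    isotope θ f x = θ.1 (f fun i => θ.2 i (x i)) := rfl

theorem isotope_inv (θ : Isotopy ι α) : isotope θ⁻¹ = (isotope θ)⁻¹ := rfl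

theorem IsMultiaryQuasigroup.isotope [DecidableEq ι] {f : (ι → α) → α}
    (hf : IsMultiaryQuasigroup f) (θ : Isotopy ι α) : IsMultiaryQuasigroup (isotope θ f) := by
  intro x i
  convert θ.1.bijective.comp ((hf (fun j => θ.2 j (x j)) i).comp (θ.2 i).bijective) using 1
  funext y
  simp only [isotope_apply, Function.comp_apply]
  congr 2
  funext j
  exact Function.apply_update (fun k => θ.2 k) x i y j

/-- The operation obtained from `f` by setting its first argument to `d`. -/
def layer (f : (Fin (n + 1) → α) → α) (d : α) : (Fin n → α) → α :=
  fun y => f (Fin.cons d y)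

theorem IsMultiaryQuasigroup.layer {f : (Fin (n + 1) → α) → α} (hf : IsMultiaryQuasigroup f)
    (d : α) : IsMultiaryQuasigroup (layer f d) := by
  intro y i
  simpa only [_root_.layer, Fin.cons_update] using hf (Fin.cons d y) i.succ

theorem IsMultiaryQuasigroup.bijective_layer_apply {f : (Fin (n + 1) → α) → α}
    (hf : IsMultiaryQuasigroup f) (y : Fin n → α) :
    Function.Bijective fun d => _root_.layer f d y := by
  rw [Function.bijective_iff_existsUnique]
  intro b
  simpa only [_root_.layer, Fin.update_cons_zero] using
    (hf (Fin.cons b y) 0).existsUnique b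

/-- An isotopy of `n + 1` arguments is one of the last `n` arguments together with a permutation
of the first. -/
def isotopyConsEquiv (n : ℕ) (α : Type*) :
    Isotopy (Fin n) α × Perm α ≃ Isotopy (Fin (n + 1)) α where
  toFun p := (p.1.1, Fin.cons p.2 p.1.2)
  invFun θ := ((θ.1, Fin.tail θ.2), θ.2 0)
  left_inv p := by simp
  right_inv θ := by simp

theorem layer_isotope_isotopyConsEquiv (θ : Isotopy (Fin n) α) (π : Perm α)
    (f : (Fin (n + 1) → α) → α) (c : α) :
    layer (isotope (isotopyConsEquiv n α (θ, π)) f) c = isotope θ (layer f (π c)) := by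
  funext y
  simp only [layer, isotope_apply, isotopyConsEquiv, Equiv.coe_fn_mk]
  congr 2
  funext i
  cases i using Fin.cases <;> rfl

theorem forall_ne_iff_forall_layer_ne {f g : (Fin (n + 1) → α) → α} :
    (∀ x, f x ≠ g x) ↔ ∀ c y, layer f c y ≠ layer g c y :=
  Fin.forall_fin_succ_pi

theorem exists_perm_isotope_layer_eq {f g : (Fin (n + 1) → α) → α}
    (hf : IsMultiaryQuasigroup f) (hg : IsMultiaryQuasigroup g) (θ : Isotopy (Fin n) α)
    (y : Fin n → α) : ∃ P : Perm α, ∀ c, isotope θ (layer f (P c)) y = layer g c y := by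
  have hf_line : Function.Bijective fun d => isotope θ (layer f d) y :=
    θ.1.bijective.comp (hf.bijective_layer_apply fun i => θ.2 i (y i))
  let F : Perm α := .ofBijective _ hf_line
  let G : Perm α := .ofBijective _ (hg.bijective_layer_apply y)
  exact ⟨G.trans F.symm, fun c => F.apply_symm_apply (G c)⟩

variable [Fintype ι] [DecidableEq ι] [Fintype α] [DecidableEq α]

theorem card_isotopy :
    Fintype.card (Isotopy ι α) = (Fintype.card α).factorial ^ (Fintype.card ι + 1) := by
  simp [Fintype.card_perm, pow_succ']

/-- The isotopies that make `f` disjoint from `g`, i.e. different from `g` at every point. -/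
def disjointIsotopies (f g : (ι → α) → α) : Finset (Isotopy ι α) :=
  {θ | ∀ x, isotope θ f x ≠ g x}

theorem card_disjointIsotopies_succ (f g : (Fin (n + 1) → α) → α) :
    #(disjointIsotopies f g) = ∑ θ : Isotopy (Fin n) α,
      #{π : Perm α | ∀ c y, isotope θ (layer f (π c)) y ≠ layer g c y} := by
  simp only [disjointIsotopies, card_filter, ← (isotopyConsEquiv n α).sum_comp,
    Fintype.sum_prod_type, forall_ne_iff_forall_layer_ne, layer_isotope_isotopyConsEquiv]

theorem card_sub_one_mul_card_disjointIsotopies_le {f g : (Fin (n + 1) → α) → α}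
    (hf : IsMultiaryQuasigroup f) (hg : IsMultiaryQuasigroup g) (c : α) :
    (Fintype.card α - 1) * #(disjointIsotopies f g) ≤
      numDerangements (Fintype.card α) *
        ∑ d, #(disjointIsotopies (layer f d) (layer g c)) := by
  have sum_layers : ∑ d, #(disjointIsotopies (layer f d) (layer g c)) =
      ∑ θ : Isotopy (Fin n) α, #{d | ∀ y, isotope θ (layer f d) y ≠ layer g c y} := by
    simp only [disjointIsotopies, card_filter]
    exact sum_comm
  rw [sum_layers, card_disjointIsotopies_succ, mul_sum, mul_sum]
  refine sum_le_sum fun θ _ => ?_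
  obtain ⟨P, hP⟩ := exists_perm_isotope_layer_eq hf hg θ fun _ => c
  exact card_sub_one_mul_card_perm_rel_le
    (R := fun c d => ∀ y, isotope θ (layer f d) y ≠ layer g c y) (fun k hk => hk _ (hP k)) c

theorem card_disjointIsotopies_zero (f g : (Fin 0 → α) → α) :
    (#(disjointIsotopies f g) : ℝ) =
      (Fintype.card α).factorial * ((Fintype.card α - 1) / Fintype.card α) := by
  rw [← card_perm_apply_ne (f Fin.elim0) (g Fin.elim0)]
  congr 1
  refine card_equiv (Equiv.prodUnique _ _) fun θ => ?_
  simp [disjointIsotopies, isotope_apply, Subsingleton.elim _ Fin.elim0]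

theorem card_disjointIsotopies_le [Nontrivial α] {f g : (Fin n → α) → α}
    (hf : IsMultiaryQuasigroup f) (hg : IsMultiaryQuasigroup g) :
    (#(disjointIsotopies f g) : ℝ) ≤ (Fintype.card α).factorial ^ (n + 1) *
      ((Fintype.card α - 1) / Fintype.card α *
        conditionalDerangementProb (Fintype.card α) ^ n) := by
  induction n with
  | zero => simp [card_disjointIsotopies_zero]
  | succ n ih =>
    set q := Fintype.card α
    have one_lt : 1 < q := Fintype.one_lt_card
    have sub_one_pos : (0 : ℝ) < q - 1 := sub_pos.2 (Nat.one_lt_cast.2 one_lt)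
    set B : ℝ := q.factorial ^ (n + 1) * ((q - 1) / q * conditionalDerangementProb q ^ n)
    obtain ⟨c⟩ : Nonempty α := inferInstance
    have step : ((q : ℝ) - 1) * #(disjointIsotopies f g) ≤
        numDerangements q * ∑ d, (#(disjointIsotopies (layer f d) (layer g c)) : ℝ) := by
      rw [← Nat.cast_one, ← Nat.cast_sub one_lt.le]
      exact_mod_cast card_sub_one_mul_card_disjointIsotopies_le hf hg c
    have layers : ∑ d, (#(disjointIsotopies (layer f d) (layer g c)) : ℝ) ≤ q * B := by
      refine (sum_le_card_nsmul _ _ B fun d _ => ih (hf.layer d) (hg.layer c)).trans_eq ?_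
      rw [nsmul_eq_mul, card_univ]
    refine le_of_mul_le_mul_left ?_ sub_one_pos
    calc ((q : ℝ) - 1) * #(disjointIsotopies f g)
        ≤ numDerangements q * (q * B) := step.trans (by gcongr)
      _ = (q - 1) * (q.factorial * conditionalDerangementProb q) * B := by
          rw [← mul_assoc, numDerangements_mul_eq one_lt]
      _ = _ := by ring

end Quasigroups

section Counting

open Equiv Finset

theorem card_two_layer_le_card_disjoint_pairs {X S β : Type*} [Fintype X] [DecidableEq β]
    {a b : S} (hab : a ≠ b) (W : Finset (X → β)) :
    Nat.card {g : X → {y : S // y = a ∨ y = b} → β // (∀ x, Function.Injective (g x)) ∧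
        (fun x => g x ⟨a, Or.inl rfl⟩) ∈ W ∧ (fun x => g x ⟨b, Or.inr rfl⟩) ∈ W} ≤
      #{p ∈ W ×ˢ W | ∀ x, p.1 x ≠ p.2 x} := by
  rw [← Fintype.card_coe, ← Nat.card_eq_fintype_card]
  refine Nat.card_le_card_of_injective (fun g => ⟨(fun x => g.1 x ⟨a, Or.inl rfl⟩,
    fun x => g.1 x ⟨b, Or.inr rfl⟩), ?_⟩) ?_
  · obtain ⟨g, hinj, hga, hgb⟩ := g
    refine mem_filter.2 ⟨mem_product.2 ⟨hga, hgb⟩, fun x h => hab ?_⟩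
    exact congrArg Subtype.val (hinj x h)
  · intro g h hgh
    obtain ⟨layer_a, layer_b⟩ := Prod.mk.inj (congrArg Subtype.val hgh)
    ext x ⟨y, rfl | rfl⟩
    exacts [congrFun layer_a x, congrFun layer_b x]

variable {ι α : Type*} [Fintype ι] [DecidableEq ι] [Fintype α] [DecidableEq α] {n : ℕ}

theorem card_disjoint_pairs_eq_card_isotope_disjoint_pairs {W : Finset ((ι → α) → α)}
    (hcl : ∀ f ∈ W, ∀ θ, isotope θ f ∈ W) (θ : Isotopy ι α) :
    #{p ∈ W ×ˢ W | ∀ x, p.1 x ≠ p.2 x} = #{p ∈ W ×ˢ W | ∀ x, isotope θ p.1 x ≠ p.2 x} := by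
  have mem_iff : ∀ f, isotope θ f ∈ W ↔ f ∈ W := fun f =>
    ⟨fun h => by simpa [isotope_inv] using hcl _ h θ⁻¹, fun h => hcl f h θ⟩
  refine (card_equiv ((isotope θ).prodCongr (.refl _)) fun p => ?_).symm
  simp [mem_iff]

theorem card_isotopy_mul_card_disjoint_pairs {W : Finset ((ι → α) → α)}
    (hcl : ∀ f ∈ W, ∀ θ, isotope θ f ∈ W) :
    (Fintype.card α).factorial ^ (Fintype.card ι + 1) * #{p ∈ W ×ˢ W | ∀ x, p.1 x ≠ p.2 x} =
      ∑ p ∈ W ×ˢ W, #(disjointIsotopies p.1 p.2) := by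
  calc (Fintype.card α).factorial ^ (Fintype.card ι + 1) * #{p ∈ W ×ˢ W | ∀ x, p.1 x ≠ p.2 x}
      = ∑ _θ : Isotopy ι α, #{p ∈ W ×ˢ W | ∀ x, p.1 x ≠ p.2 x} := by
        rw [sum_const, card_univ, card_isotopy, smul_eq_mul]
    _ = ∑ θ : Isotopy ι α, #{p ∈ W ×ˢ W | ∀ x, isotope θ p.1 x ≠ p.2 x} :=
        sum_congr rfl fun θ _ => card_disjoint_pairs_eq_card_isotope_disjoint_pairs hcl θ
    _ = ∑ p ∈ W ×ˢ W, #(disjointIsotopies p.1 p.2) := by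
        simp only [disjointIsotopies, card_filter]
        exact sum_comm

theorem card_disjoint_pairs_le [Nontrivial α] {W : Finset ((Fin n → α) → α)}
    (hW : ∀ f ∈ W, IsMultiaryQuasigroup f) (hcl : ∀ f ∈ W, ∀ θ, isotope θ f ∈ W) :
    (#{p ∈ W ×ˢ W | ∀ x, p.1 x ≠ p.2 x} : ℝ) ≤
      (Fintype.card α - 1) / Fintype.card α *
        conditionalDerangementProb (Fintype.card α) ^ n * #W ^ 2 := by
  set q := Fintype.card α
  have factorial_pow_pos : (0 : ℝ) < q.factorial ^ (n + 1) := by positivity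
  refine le_of_mul_le_mul_left ?_ factorial_pow_pos
  calc (q.factorial : ℝ) ^ (n + 1) * #{p ∈ W ×ˢ W | ∀ x, p.1 x ≠ p.2 x}
      = ∑ p ∈ W ×ˢ W, (#(disjointIsotopies p.1 p.2) : ℝ) := by
        have double_count := card_isotopy_mul_card_disjoint_pairs hcl
        rw [Fintype.card_fin] at double_count
        exact_mod_cast double_count
    _ ≤ #(W ×ˢ W) • ((q.factorial : ℝ) ^ (n + 1) *
          ((q - 1) / q * conditionalDerangementProb q ^ n)) :=
        sum_le_card_nsmul _ _ _ fun p hp =>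
          card_disjointIsotopies_le (hW _ (mem_product.1 hp).1) (hW _ (mem_product.1 hp).2)
    _ = q.factorial ^ (n + 1) *
          ((q - 1) / q * conditionalDerangementProb q ^ n * #W ^ 2) := by
        rw [card_product, nsmul_eq_mul]
        push_cast
        ring

end Counting

theorem IsNQuasigroup.isMultiaryQuasigroup {n : ℕ} {f : (Fin n → V4) → V4}
    (hf : IsNQuasigroup f) : IsMultiaryQuasigroup f := fun x i =>
  Function.bijective_iff_existsUnique _ |>.2 (hf x i)

theorem IsMultiaryQuasigroup.isNQuasigroup {n : ℕ} {f : (Fin n → V4) → V4}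
    (hf : IsMultiaryQuasigroup f) : IsNQuasigroup f := fun x i =>
  (hf x i).existsUnique

theorem ClosedUnderEquiv.isotope_mem {n : ℕ} {W : Set ((Fin n → V4) → V4)}
    (hcl : ClosedUnderEquiv W) {f : (Fin n → V4) → V4} (hf : f ∈ W)
    (hf_quasigroup : IsNQuasigroup f) (θ : Isotopy (Fin n) V4) : isotope θ f ∈ W := by
  have isotope_quasigroup := (hf_quasigroup.isMultiaryQuasigroup.isotope θ).isNQuasigroup
  refine hcl f hf _ isotope_quasigroup ⟨1, θ⁻¹.1, θ⁻¹.2, fun x => ?_⟩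
  exact congrFun ((isotope θ).symm_apply_apply f).symm x

theorem IsPartialTwoLayerQuasigroup.injective {n : ℕ} {a b : V4}
    {g : (Fin n → V4) → {y : V4 // y = a ∨ y = b} → V4}
    (hg : IsPartialTwoLayerQuasigroup a b g) (x : Fin n → V4) : Function.Injective (g x) :=
  fun s t hst => hg.2 x (g x t) s t hst rfl

theorem card_two_layer_partial_quasigroups_general {α : Type*} [Fintype α] {n : ℕ}
    {a b : α} (hab : a ≠ b) {W : Set ((Fin n → α) → α)}
    (hW : ∀ f ∈ W, IsMultiaryQuasigroup f) (hcl : ∀ f ∈ W, ∀ θ, isotope θ f ∈ W) :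
    (Nat.card {g : (Fin n → α) → {y : α // y = a ∨ y = b} → α //
        (∀ x, Function.Injective (g x)) ∧
        (fun x => g x ⟨a, Or.inl rfl⟩) ∈ W ∧ (fun x => g x ⟨b, Or.inr rfl⟩) ∈ W} : ℝ) ≤
      (Fintype.card α - 1) / Fintype.card α *
        conditionalDerangementProb (Fintype.card α) ^ n * Nat.card W ^ 2 := by
  classical
  have : Nontrivial α := ⟨a, b, hab⟩
  lift W to Finset ((Fin n → α) → α) using W.toFinite
  rw [Nat.card_coe_set_eq, Set.ncard_coe_finset]
  exact (Nat.cast_le.2 (card_two_layer_le_card_disjoint_pairs hab W)).trans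
    (card_disjoint_pairs_le hW hcl)

/-- Corollary 2: with `n = m + 1`, fix distinct `a, b ∈ Σ` and a set `W` of
`m`-quasigroups closed under equivalence.  The number of partial
`n`-quasigroups `g : Σ^(n−1) × {a,b} → Σ` whose two layers `g_a, g_b` both
belong to `W` is at most `3·|W|²/2^(n+1)`. -/
theorem card_two_layer_partial_quasigroups (m : ℕ) (a b : V4) (hab : a ≠ b)
    (W : Set ((Fin m → V4) → V4))
    (hW : ∀ f ∈ W, IsNQuasigroup f) (hcl : ClosedUnderEquiv W) :
    (Nat.card {g : (Fin m → V4) → {y : V4 // y = a ∨ y = b} → V4 //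
        IsPartialTwoLayerQuasigroup a b g ∧
        (fun x => g x ⟨a, Or.inl rfl⟩) ∈ W ∧
        (fun x => g x ⟨b, Or.inr rfl⟩) ∈ W} : ℝ) ≤
      3 * (Nat.card W : ℝ) ^ 2 / 2 ^ (m + 2) := by
  have layers_injective := card_two_layer_partial_quasigroups_general hab
    (fun f hf => (hW f hf).isMultiaryQuasigroup) fun f hf => hcl.isotope_mem hf (hW f hf)
  refine (Nat.cast_le.2 (Nat.card_mono (Set.toFinite _) ?_)).trans (layers_injective.trans_eq ?_)
  · exact fun g hg => ⟨hg.1.injective, hg.2⟩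
  · rw [Fintype.card_fin, conditionalDerangementProb_four, one_div_pow]
    ring
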